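/- Let σ₁,…,σ_k be non-crossing RGFs and let p be a permutation of {1,…,k}. Then σ₁[σ₂]⋯[σ_k] ≃cc σ_{p(1)}[σ_{p(2)}]⋯[σ_{p(k)}]. -/

import Mathlib

/-- A restricted growth function (canonical sequential form of a set partition):
a word over the positive integers whose first letter is 1 and where each letter
is at most one more than the maximum of the preceding letters. -/
def IsRGF (w : List ℕ) : Prop :=
  (∀ x ∈ w, 1 ≤ x) ∧
  (w ≠ [] → w.getD 0 0 = 1) ∧
  ∀ i, i + 1 < w.length → w.getD (i + 1) 0 ≤ ((w.take (i + 1)).foldr max 0) + 1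

/-- Two words of the same length are order-isomorphic: corresponding entries
compare the same way (this preserves equalities as well). -/
def WordOrdIso (s t : List ℕ) : Prop :=
  s.length = t.length ∧
  ∀ i j, i < s.length → j < s.length →
    (s.getD i 0 < s.getD j 0 ↔ t.getD i 0 < t.getD j 0)

/-- `w` contains the pattern `p`: a subsequence of `w` is order-isomorphic to `p`. -/
def PatContains (w p : List ℕ) : Prop := ∃ s : List ℕ, s.Sublist w ∧ WordOrdIso s p

/-- `w` avoids the pattern `p`. -/
def PatAvoids (w p : List ℕ) : Prop := ¬ PatContains w p

/-- `pCount n T` = number of RGFs of length `n` avoiding every pattern in `T`. -/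
noncomputable def pCount (n : ℕ) (T : Set (List ℕ)) : ℕ :=
  {w : List ℕ | IsRGF w ∧ w.length = n ∧ ∀ p ∈ T, PatAvoids w p}.ncard

/-- A word is non-crossing if it avoids the pattern 1212. -/
def NonCrossing (w : List ℕ) : Prop := PatAvoids w [1,2,1,2]

/-- The number of distinct letters of an RGF equals its maximum letter. -/
def nLetters (w : List ℕ) : ℕ := w.foldr max 0

/-- `rgfComp a b` is the pattern `a[b]`: `a` followed by `b` shifted up by the
number of distinct letters of `a`. -/
def rgfComp (a b : List ℕ) : List ℕ := a ++ b.map (· + nLetters a)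

/-- A connected RGF: nonempty and not expressible as `σ[τ]` with `σ, τ` nonempty RGFs. -/
def Connected (w : List ℕ) : Prop :=
  w ≠ [] ∧ ¬ ∃ a b : List ℕ, IsRGF a ∧ IsRGF b ∧ a ≠ [] ∧ b ≠ [] ∧ w = rgfComp a b

/-- `w` decomposes as `σ₁[σ₂]⋯[σ_p]` with each `σ_i` a connected RGF. -/
def HasComponents (w : List ℕ) (p : ℕ) : Prop :=
  ∃ l : List (List ℕ), l.length = p ∧ (∀ c ∈ l, IsRGF c ∧ Connected c) ∧
    w = l.foldr rgfComp []

/-- Number of non-crossing RGFs of length `n` with `p` components avoiding `σ`. -/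
noncomputable def ncCount (n p : ℕ) (σ : List ℕ) : ℕ :=
  {w : List ℕ | IsRGF w ∧ NonCrossing w ∧ w.length = n ∧ PatAvoids w σ ∧
    HasComponents w p}.ncard

/-- cc-equivalence of patterns. -/
def ccEquiv (σ τ : List ℕ) : Prop := ∀ n p : ℕ, ncCount n p σ = ncCount n p τ

/-- Number of non-crossing RGFs of length `n` avoiding `σ`. -/
noncomputable def ncAvoidCount (n : ℕ) (σ : List ℕ) : ℕ :=
  {w : List ℕ | IsRGF w ∧ NonCrossing w ∧ w.length = n ∧ PatAvoids w σ}.ncard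

/-- Auxiliary: builds `1[σ₁]1[σ₂]⋯1[σ_k]1` with accumulated letter shift `s`. -/
def onePatAux : ℕ → List (List ℕ) → List ℕ
  | _, [] => [1]
  | s, c :: rest => 1 :: (c.map (· + s) ++ onePatAux (s + nLetters c) rest)

/-- The pattern `1[σ₁]1[σ₂]⋯1[σ_k]1`. -/
def onePat (l : List (List ℕ)) : List ℕ := onePatAux 1 l

/-- The pattern `1[σ]1[τ]`. -/
def pat2 (σ τ : List ℕ) : List ℕ :=
  1 :: (σ.map (· + 1) ++ 1 :: τ.map (· + (1 + nLetters σ)))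

/-!
Every nonempty non-crossing RGF is uniquely of the form `u1[v]` with `u` and `v` non-crossing RGFs,
so non-crossing RGFs are binary trees, and `u1` is the first component. Deleting the final `1` of
the first component, `u1[v] ↦ u[v]`, is a bijection from the non-crossing RGFs of length `n + 1`
with `p + 1` components to those of length `n` with at least `p` components. Split a pattern into
connected factors `σ₁[σ₂]⋯[σ_k]`. The deletion affects its containment only if `u` is critical for
`σ₁`, that is, `u` avoids `σ₁` but `u1` contains it: then `u[v]` avoids the pattern if and only if
`v` does, whereas `u1[v]` avoids it if and only if `v` avoids `σ₂[σ₃]⋯[σ_k]`.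

Hence the generating functions of the words with at least `p` components avoiding `σ₁[σ₂]⋯[σ_k]`
are determined by those for `σ₂[σ₃]⋯[σ_k]` through a linear recurrence in `p` that depends on `σ₁`
only via the generating function of its critical words. The recurrence operators of different
factors commute, so exchanging two adjacent factors does not change the generating functions.
-/

/-! ### Words and restricted growth functions -/

section Words

variable {a b u v w : List ℕ} {x : ℕ}

theorem nLetters_append (a b : List ℕ) : nLetters (a ++ b) = max (nLetters a) (nLetters b) := by
  induction a with
  | nil => simp [nLetters]
  | cons x a ih =>
    change max x (nLetters (a ++ b)) = max (max x (nLetters a)) (nLetters b)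
    rw [ih, max_assoc]

theorem le_nLetters (h : x ∈ a) : x ≤ nLetters a := by
  obtain ⟨u, v, rfl⟩ := List.append_of_mem h
  rw [nLetters_append]
  exact le_max_of_le_right (le_max_left x _)

theorem nLetters_mem (h : a ≠ []) : nLetters a ∈ a := by
  induction a with
  | nil => contradiction
  | cons y a ih =>
    rcases eq_or_ne a [] with rfl | ha
    · simp [nLetters]
    · rcases max_choice y (nLetters a) with hy | hy
      · exact List.mem_cons.2 (.inl hy)
      · exact List.mem_cons.2 (.inr (hy.symm ▸ ih ha :))

theorem nLetters_rgfComp (a b : List ℕ) : nLetters (rgfComp a b) = nLetters a + nLetters b := by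
  induction b using List.reverseRecOn with
  | nil => simp [rgfComp, nLetters]
  | append_singleton b x ih =>
    rw [rgfComp, List.map_append, ← List.append_assoc, nLetters_append, ← rgfComp, ih,
      nLetters_append]
    simp only [nLetters, List.map_cons, List.map_nil, List.foldr_cons, List.foldr_nil]
    omega

theorem rgfComp_nil (a : List ℕ) : rgfComp a [] = a := by
  simp only [rgfComp, List.map_nil, List.append_nil]

theorem nil_rgfComp (a : List ℕ) : rgfComp [] a = a := by simp [rgfComp, nLetters]

theorem rgfComp_assoc (a b c : List ℕ) :
    rgfComp (rgfComp a b) c = rgfComp a (rgfComp b c) := by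
  rw [rgfComp, nLetters_rgfComp]
  simp [rgfComp, add_comm]

theorem rgfComp_append (a b c : List ℕ) :
    rgfComp a (b ++ c) = rgfComp a b ++ c.map (· + nLetters a) := by
  simp only [rgfComp, List.map_append, List.append_assoc]

theorem isRGF_nil : IsRGF [] := by simp [IsRGF]

theorem forall_getD_le_nLetters_take_append_singleton :
    (∀ i, i + 1 < (w ++ [x]).length →
      (w ++ [x]).getD (i + 1) 0 ≤ nLetters ((w ++ [x]).take (i + 1)) + 1) ↔
    (∀ i, i + 1 < w.length → w.getD (i + 1) 0 ≤ nLetters (w.take (i + 1)) + 1) ∧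
      (w ≠ [] → x ≤ nLetters w + 1) := by
  have below : ∀ i, i + 1 < w.length → (w ++ [x]).getD (i + 1) 0 = w.getD (i + 1) 0 ∧
      (w ++ [x]).take (i + 1) = w.take (i + 1) := fun i hi =>
    ⟨List.getD_append _ _ _ _ hi, List.take_append_of_le_length hi.le⟩
  have last : (w ++ [x]).getD w.length 0 = x ∧ (w ++ [x]).take w.length = w := by simp
  constructor
  · refine fun h => ⟨fun i hi => ?_, fun hw => ?_⟩
    · simpa only [below i hi] using h i (by simp; omega)
    · obtain ⟨i, hi⟩ := Nat.exists_eq_add_one_of_ne_zero (List.length_pos_iff.2 hw).ne'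
      simpa only [← hi, last] using h i (by simp [hi])
  · rintro ⟨h, hx⟩ i hi
    rw [List.length_append, List.length_singleton, Nat.add_lt_add_iff_right] at hi
    rcases Nat.lt_or_eq_of_le (Nat.succ_le_of_lt hi) with hi | hi
    · simpa only [below i hi] using h i hi
    · have hw : w ≠ [] := List.length_pos_iff.1 (by omega)
      rw [← Nat.succ_eq_add_one, hi, last.1, last.2]
      exact hx hw

theorem isRGF_append_singleton :
    IsRGF (w ++ [x]) ↔ IsRGF w ∧ 1 ≤ x ∧ x ≤ nLetters w + 1 := by
  unfold IsRGF
  change _ ∧ _ ∧ (∀ i, _ → _ ≤ nLetters _ + 1) ↔ (_ ∧ _ ∧ (∀ i, _ → _ ≤ nLetters _ + 1)) ∧ _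
  rw [forall_getD_le_nLetters_take_append_singleton]
  rcases eq_or_ne w [] with rfl | hw
  · simpa [nLetters] using fun hx : 1 ≤ x => ⟨fun h => h.le, fun h => h.antisymm hx⟩
  · have head : (w ++ [x]).getD 0 0 = w.getD 0 0 :=
      List.getD_append _ _ _ _ (List.length_pos_iff.2 hw)
    simp only [List.forall_mem_append, List.forall_mem_singleton, head, hw, ne_eq,
      List.append_eq_nil_iff, List.cons_ne_self]
    tauto

theorem IsRGF.of_append (h : IsRGF (u ++ v)) : IsRGF u := by
  induction v using List.reverseRecOn with
  | nil => simpa using h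
  | append_singleton v y ih =>
    rw [← List.append_assoc] at h
    exact ih (isRGF_append_singleton.1 h).1

theorem IsRGF.append_one (h : IsRGF w) : IsRGF (w ++ [1]) :=
  isRGF_append_singleton.2 ⟨h, le_rfl, Nat.le_add_left 1 _⟩

theorem IsRGF.mem_of_le (h : IsRGF w) (h1 : 1 ≤ x) (hx : x ≤ nLetters w) : x ∈ w := by
  induction w using List.reverseRecOn with
  | nil => exact absurd (h1.trans hx) (by simp [nLetters])
  | append_singleton w y ih =>
    obtain ⟨hw, -, hy⟩ := isRGF_append_singleton.1 h
    rw [nLetters_append, show nLetters [y] = y from Nat.max_zero y] at hx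
    by_cases hxw : x ≤ nLetters w
    · exact List.mem_append_left _ (ih hw hxw)
    · exact List.mem_append_right _ (List.mem_singleton.2 (by omega))

theorem IsRGF.rgfComp (ha : IsRGF a) (hb : IsRGF b) : IsRGF (rgfComp a b) := by
  induction b using List.reverseRecOn with
  | nil => rwa [rgfComp_nil]
  | append_singleton b y ih =>
    obtain ⟨hb, hy1, hy⟩ := isRGF_append_singleton.1 hb
    rw [rgfComp_append, List.map_singleton]
    refine isRGF_append_singleton.2 ⟨ih hb, hy1.trans (Nat.le_add_right _ _), ?_⟩
    rw [nLetters_rgfComp]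
    omega

theorem IsRGF.exists_eq_rgfComp (h : IsRGF (u ++ v)) (huv : ∀ x ∈ u, ∀ y ∈ v, x < y) :
    ∃ b, IsRGF b ∧ u ++ v = _root_.rgfComp u b := by
  induction v using List.reverseRecOn with
  | nil => exact ⟨[], isRGF_nil, by rw [rgfComp_nil, List.append_nil]⟩
  | append_singleton v y ih =>
    rw [← List.append_assoc] at h ⊢
    obtain ⟨hv, hy1, hy⟩ := isRGF_append_singleton.1 h
    obtain ⟨b, hb, hub⟩ := ih hv fun x hx z hz => huv x hx z (List.mem_append_left _ hz)
    have huy : nLetters u < y := by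
      rcases eq_or_ne u [] with rfl | hu
      · exact hy1
      · exact huv _ (nLetters_mem hu) y (by simp)
    rw [hub, nLetters_rgfComp] at hy
    refine ⟨b ++ [y - nLetters u], isRGF_append_singleton.2 ⟨hb, by omega, by omega⟩, ?_⟩
    rw [hub, rgfComp_append, List.map_singleton, Nat.sub_add_cancel huy.le]

end Words

section Concatenation

/-- The word `σ₁[σ₂]⋯[σ_k]` built from the list of its factors. -/
def rgfConcat (L : List (List ℕ)) : List ℕ := L.foldr rgfComp []

variable {L M : List (List ℕ)}

theorem rgfConcat_cons (a : List ℕ) (L : List (List ℕ)) :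
    rgfConcat (a :: L) = rgfComp a (rgfConcat L) := rfl

theorem rgfConcat_singleton (a : List ℕ) : rgfConcat [a] = a := rgfComp_nil a

theorem rgfConcat_append (L M : List (List ℕ)) :
    rgfConcat (L ++ M) = rgfComp (rgfConcat L) (rgfConcat M) := by
  induction L with
  | nil => exact (nil_rgfComp _).symm
  | cons a L ih => rw [List.cons_append, rgfConcat_cons, rgfConcat_cons, ih, rgfComp_assoc]

theorem rgfConcat_flatMap (f : List ℕ → List (List ℕ)) (L : List (List ℕ)) :
    rgfConcat (L.flatMap f) = rgfConcat (L.map fun a => rgfConcat (f a)) := by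
  induction L with
  | nil => rfl
  | cons a L ih => rw [List.flatMap_cons, rgfConcat_append, ih, List.map_cons, rgfConcat_cons]

theorem isRGF_rgfConcat (h : ∀ c ∈ L, IsRGF c) : IsRGF (rgfConcat L) := by
  induction L with
  | nil => exact isRGF_nil
  | cons a L ih =>
    rw [List.forall_mem_cons] at h
    exact h.1.rgfComp (ih h.2)

theorem exists_rgfConcat_eq {w : List ℕ} (h : IsRGF w) :
    ∃ L : List (List ℕ), (∀ c ∈ L, IsRGF c ∧ Connected c) ∧ rgfConcat L = w := by
  induction hn : w.length using Nat.strong_induction_on generalizing w with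
  | _ n ih =>
    rcases eq_or_ne w [] with rfl | hw
    · exact ⟨[], by simp, rfl⟩
    by_cases hc : Connected w
    · exact ⟨[w], by simp [h, hc], rgfConcat_singleton w⟩
    obtain ⟨a, b, ha, hb, ha0, hb0, rfl⟩ := not_not.1 fun hab => hc ⟨hw, hab⟩
    rw [rgfComp, List.length_append, List.length_map] at hn
    have ha1 := List.length_pos_iff.2 ha0
    have hb1 := List.length_pos_iff.2 hb0
    obtain ⟨L, hL, rfl⟩ := ih a.length (by omega) ha rfl
    obtain ⟨M, hM, rfl⟩ := ih b.length (by omega) hb rfl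
    exact ⟨L ++ M, List.forall_mem_append.2 ⟨hL, hM⟩, rgfConcat_append L M⟩

theorem exists_rgfConcat_eq_of_append (hL : ∀ c ∈ L, IsRGF c ∧ Connected c) {u v : List ℕ}
    (h : rgfConcat L = u ++ v) (huv : ∀ x ∈ u, ∀ y ∈ v, x < y) :
    ∃ L₁ L₂, L = L₁ ++ L₂ ∧ rgfConcat L₁ = u := by
  induction L generalizing u v with
  | nil => exact ⟨[], [], rfl, (List.append_eq_nil_iff.1 h.symm).1.symm⟩
  | cons c L ih =>
    obtain ⟨⟨hc, -, hconn⟩, hL⟩ := List.forall_mem_cons.1 hL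
    rw [rgfConcat_cons, rgfComp] at h
    rcases List.append_eq_append_iff.1 h with ⟨r, rfl, hr⟩ | ⟨r, rfl, rfl⟩
    · obtain ⟨r, v, hrv, rfl, rfl⟩ := List.map_eq_append_iff.1 hr
      obtain ⟨L₁, L₂, rfl, rfl⟩ := ih hL hrv fun x hx y hy => Nat.lt_of_add_lt_add_right <|
        huv _ (List.mem_append_right _ (List.mem_map_of_mem hx)) _ (List.mem_map_of_mem hy)
      exact ⟨_ :: L₁, L₂, rfl, rfl⟩
    · rcases eq_or_ne u [] with rfl | hu
      · exact ⟨[], _, rfl, rfl⟩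
      rcases eq_or_ne r [] with rfl | hr
      · exact ⟨[u], L, by rw [List.append_nil]; rfl, rgfConcat_singleton u⟩
      obtain ⟨b, hb, hub⟩ := hc.exists_eq_rgfComp fun x hx y hy =>
        huv x hx y (List.mem_append_left _ hy)
      refine absurd ⟨u, b, hc.of_append, hb, hu, ?_, hub⟩ hconn
      rintro rfl
      rw [rgfComp_nil] at hub
      exact hr (List.append_right_eq_self.1 hub)

end Concatenation

/-! ### Pattern containment -/

section Containment

variable {a b p q u v w : List ℕ}

theorem patContains_iff : PatContains w p ↔
    ∃ f : ℕ → ℕ, StrictMonoOn f {x | x ∈ p} ∧ (p.map f).Sublist w := by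
  constructor
  · rintro ⟨s, hs, hl, ho⟩
    have val : ∀ x ∈ p, p.idxOf x < s.length ∧ p.getD (p.idxOf x) 0 = x := fun x hx => by
      have hx' := List.idxOf_lt_length_iff.2 hx
      exact ⟨hl ▸ hx', by rw [List.getD_eq_getElem _ _ hx', List.getElem_idxOf]⟩
    refine ⟨fun x => s.getD (p.idxOf x) 0, fun x hx y hy hxy => ?_, ?_⟩
    · obtain ⟨⟨hx, hpx⟩, ⟨hy, hpy⟩⟩ := val x hx, val y hy
      exact (ho _ _ hx hy).2 (by rwa [hpx, hpy])
    · convert hs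
      refine List.ext_getElem (by rw [List.length_map, hl]) fun i hi hi' => ?_
      have hip : i < p.length := hl ▸ hi'
      obtain ⟨hj, hpj⟩ := val p[i] (List.getElem_mem hip)
      have hlt := ho _ i hj hi'
      have hgt := ho i _ hi' hj
      rw [hpj, List.getD_eq_getElem _ _ hi', List.getD_eq_getElem p _ hip] at hlt hgt
      rw [List.getElem_map]
      omega
  · rintro ⟨f, hf, hs⟩
    refine ⟨p.map f, hs, List.length_map f, fun i j hi hj => ?_⟩
    rw [List.length_map] at hi hj
    simp only [List.getD_eq_getElem, List.length_map, hi, hj, List.getElem_map]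
    exact hf.lt_iff_lt (List.getElem_mem hi) (List.getElem_mem hj)

theorem patContains_nil (w : List ℕ) : PatContains w [] :=
  patContains_iff.2 ⟨id, by simp [StrictMonoOn], by simp⟩

theorem PatContains.length_le (h : PatContains w p) : p.length ≤ w.length := by
  obtain ⟨s, hs, hl, -⟩ := h
  exact hl ▸ hs.length_le

theorem PatContains.mono (h : PatContains u p) (huw : u.Sublist w) : PatContains w p :=
  let ⟨s, hs, hp⟩ := h
  ⟨s, hs.trans huw, hp⟩

theorem patContains_map_add (K : ℕ) : PatContains (w.map (· + K)) p ↔ PatContains w p := by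
  simp only [patContains_iff]
  constructor
  · rintro ⟨f, hf, hs⟩
    have hK : ∀ x ∈ p, K ≤ f x := fun x hx => by
      obtain ⟨y, -, hy⟩ := List.mem_map.1 (hs.mem (List.mem_map_of_mem hx))
      exact hy ▸ Nat.le_add_left K y
    refine ⟨fun x => f x - K, fun x hx y hy hxy => ?_, ?_⟩
    · exact Nat.sub_lt_sub_right (hK x hx) (hf hx hy hxy)
    · simpa [Function.comp_def] using hs.map (· - K)
  · rintro ⟨f, hf, hs⟩
    refine ⟨fun x => f x + K, fun x hx y hy hxy => Nat.add_lt_add_right (hf hx hy hxy) K, ?_⟩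
    simpa [Function.comp_def] using hs.map (· + K)

theorem PatContains.of_map_add_sublist {K : ℕ} (h : PatContains w p)
    (hq : (q.map (· + K)).Sublist p) : PatContains w q := by
  rw [patContains_iff] at h ⊢
  obtain ⟨f, hf, hs⟩ := h
  have mem : ∀ x ∈ q, x + K ∈ p := fun x hx => hq.mem (List.mem_map.2 ⟨x, hx, rfl⟩)
  refine ⟨fun x => f (x + K), fun x hx y hy hxy => ?_, ?_⟩
  · exact hf (mem x hx) (mem y hy) (Nat.add_lt_add_right hxy K)
  · simpa [Function.comp_def] using (hq.map f).trans hs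

theorem PatContains.of_rgfComp_left (h : PatContains w (rgfComp p q)) : PatContains w p :=
  h.of_map_add_sublist (K := 0) (by simp [rgfComp])

theorem PatContains.of_rgfComp_right (h : PatContains w (rgfComp p q)) : PatContains w q :=
  h.of_map_add_sublist (List.sublist_append_right p _)

theorem PatContains.map_add (K : ℕ) (h : PatContains w p) : PatContains w (p.map (· + K)) := by
  rw [patContains_iff] at h ⊢
  obtain ⟨f, hf, hs⟩ := h
  refine ⟨fun x => f (x - K), fun x hx y hy hxy => ?_, ?_⟩
  · obtain ⟨x, hx', rfl⟩ := List.mem_map.1 hx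
    obtain ⟨y, hy', rfl⟩ := List.mem_map.1 hy
    simpa using hf hx' hy' (Nat.lt_of_add_lt_add_right hxy)
  · simpa [Function.comp_def] using hs

theorem PatContains.append (hp : PatContains a p) (hq : PatContains b q)
    (hab : ∀ x ∈ a, ∀ y ∈ b, x < y) (hpq : ∀ x ∈ p, ∀ y ∈ q, x < y) :
    PatContains (a ++ b) (p ++ q) := by
  rw [patContains_iff] at *
  obtain ⟨f, hf, hfa⟩ := hp
  obtain ⟨g, hg, hgb⟩ := hq
  have eq_left : ∀ x ∈ p, (if x ∈ p then f x else g x) = f x := fun x hx => if_pos hx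
  have eq_right : ∀ x ∈ q, (if x ∈ p then f x else g x) = g x := fun x hx =>
    if_neg fun hx' => lt_irrefl x (hpq x hx' x hx)
  refine ⟨fun x => if x ∈ p then f x else g x, fun x hx y hy hxy => ?_, ?_⟩
  · dsimp only
    rcases List.mem_append.1 hx with hx | hx <;> rcases List.mem_append.1 hy with hy | hy
    · rw [eq_left x hx, eq_left y hy]
      exact hf hx hy hxy
    · rw [eq_left x hx, eq_right y hy]
      exact hab _ (hfa.mem (List.mem_map_of_mem hx)) _ (hgb.mem (List.mem_map_of_mem hy))
    · exact absurd hxy (hpq y hy x hx).not_gt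
    · rw [eq_right x hx, eq_right y hy]
      exact hg hx hy hxy
  · rw [List.map_append, List.map_congr_left eq_left, List.map_congr_left eq_right]
    exact hfa.append hgb

theorem PatContains.exists_eq_append (h : PatContains (a ++ b) p)
    (hab : ∀ x ∈ a, ∀ y ∈ b, x < y) : ∃ p₁ p₂, p = p₁ ++ p₂ ∧ (∀ x ∈ p₁, ∀ y ∈ p₂, x < y) ∧
      PatContains a p₁ ∧ PatContains b p₂ := by
  simp only [patContains_iff] at h ⊢
  obtain ⟨f, hf, hs⟩ := h
  obtain ⟨s₁, s₂, hs, ha, hb⟩ := List.sublist_append_iff.1 hs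
  obtain ⟨p₁, p₂, rfl, rfl, rfl⟩ := List.map_eq_append_iff.1 hs
  refine ⟨p₁, p₂, rfl, fun x hx y hy => ?_, ⟨f, hf.mono fun x => List.mem_append_left _, ha⟩,
    ⟨f, hf.mono fun x => List.mem_append_right _, hb⟩⟩
  exact (hf.lt_iff_lt (List.mem_append_left _ hx) (List.mem_append_right _ hy)).1
    (hab _ (ha.mem (List.mem_map_of_mem hx)) _ (hb.mem (List.mem_map_of_mem hy)))

theorem lt_of_mem_of_mem_map_add_nLetters (hv : ∀ x ∈ v, 1 ≤ x) :
    ∀ x ∈ w, ∀ y ∈ v.map (· + nLetters w), x < y := by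
  simp only [List.forall_mem_map]
  intro x hx y hy
  have := le_nLetters hx
  have := hv y hy
  omega

theorem PatContains.rgfComp (hp : PatContains w p) (hq : PatContains v q)
    (hv : ∀ x ∈ v, 1 ≤ x) (hq1 : ∀ x ∈ q, 1 ≤ x) :
    PatContains (rgfComp w v) (rgfComp p q) :=
  hp.append (((patContains_map_add _).2 hq).map_add _) (lt_of_mem_of_mem_map_add_nLetters hv)
    (lt_of_mem_of_mem_map_add_nLetters hq1)

theorem PatContains.exists_eq_append_of_rgfComp (h : PatContains (_root_.rgfComp w v) p)
    (hv : ∀ x ∈ v, 1 ≤ x) : ∃ p₁ p₂, p = p₁ ++ p₂ ∧ (∀ x ∈ p₁, ∀ y ∈ p₂, x < y) ∧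
      PatContains w p₁ ∧ PatContains v p₂ := by
  simp only [← patContains_map_add (w := v) (nLetters w)]
  exact PatContains.exists_eq_append h (lt_of_mem_of_mem_map_add_nLetters hv)

/-- The final letter `1` would have to be the image of the last letter of the pattern, which is
not minimal. -/
theorem PatContains.of_append_one {x y : ℕ} (h : PatContains (w ++ [1]) (p ++ [y]))
    (hw : ∀ z ∈ w, 1 ≤ z) (hx : x ∈ p) (hxy : x < y) : PatContains w (p ++ [y]) := by
  rw [patContains_iff] at h ⊢
  obtain ⟨f, hf, hs⟩ := h
  refine ⟨f, hf, ?_⟩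
  have hfx : 1 ≤ f x := (List.forall_mem_append.2 ⟨hw, by simp⟩) _
    (hs.mem (List.mem_map_of_mem (List.mem_append_left _ hx)))
  have hfy : f x < f y := hf (List.mem_append_left _ hx) (by simp) hxy
  obtain ⟨s₁, s₂, hs, hs₁, hs₂⟩ := List.sublist_append_iff.1 hs
  rcases List.sublist_singleton.1 hs₂ with rfl | rfl
  · rwa [hs, List.append_nil]
  · rw [List.map_append] at hs
    have : f y = 1 := List.singleton_injective (List.append_inj_right' hs rfl)
    omega

theorem patContains_append_one_rgfComp (hw : ∀ x ∈ w, 1 ≤ x) (hp : p ≠ []) (hq : q ≠ [])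
    (hq1 : ∀ x ∈ q, 1 ≤ x) :
    PatContains (w ++ [1]) (rgfComp p q) ↔ PatContains w (rgfComp p q) := by
  refine ⟨fun h => ?_, fun h => h.mono (List.sublist_append_left w _)⟩
  obtain ⟨q, y, rfl⟩ := List.eq_nil_or_concat q |>.resolve_left hq
  rw [List.concat_eq_append, rgfComp_append] at h ⊢
  refine h.of_append_one hw (List.mem_append_left _ (nLetters_mem hp)) ?_
  exact Nat.lt_add_of_pos_left (hq1 y (by simp))

theorem patContains_rgfComp_rgfConcat {L : List (List ℕ)} (hL : ∀ c ∈ L, IsRGF c ∧ Connected c)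
    (hv : ∀ x ∈ v, 1 ≤ x) : PatContains (rgfComp w v) (rgfConcat L) ↔
      ∃ L₁ L₂, L = L₁ ++ L₂ ∧ PatContains w (rgfConcat L₁) ∧ PatContains v (rgfConcat L₂) := by
  constructor
  · intro h
    obtain ⟨p₁, p₂, hp, hlt, h₁, h₂⟩ := h.exists_eq_append_of_rgfComp hv
    obtain ⟨L₁, L₂, rfl, rfl⟩ := exists_rgfConcat_eq_of_append hL hp hlt
    rw [rgfConcat_append] at hp
    obtain rfl := List.append_cancel_left hp
    exact ⟨L₁, L₂, rfl, h₁, h₂.of_map_add_sublist (List.Sublist.refl _)⟩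
  · rintro ⟨L₁, L₂, rfl, h₁, h₂⟩
    rw [rgfConcat_append]
    exact h₁.rgfComp h₂ hv (isRGF_rgfConcat fun c hc => (hL c (List.mem_append_right _ hc)).1).1

end Containment

section Indicators

variable {σ u v : List ℕ} {M : List (List ℕ)}

open scoped Classical in
/-- The indicator, with values in `ℤ`, of the words avoiding the pattern `σ₁[σ₂]⋯[σ_k]` with
factors `L`. -/
noncomputable def avoidInd (L : List (List ℕ)) (w : List ℕ) : ℤ :=
  if PatContains w (rgfConcat L) then 0 else 1

open scoped Classical in
/-- The indicator of the words `u` avoiding `σ` for which `u` followed by `1` contains `σ`. -/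
noncomputable def critInd (σ u : List ℕ) : ℤ :=
  if PatContains (u ++ [1]) σ ∧ ¬ PatContains u σ then 1 else 0

theorem avoidInd_congr {L L' : List (List ℕ)} {w w' : List ℕ}
    (h : PatContains w (rgfConcat L) ↔ PatContains w' (rgfConcat L')) :
    avoidInd L w = avoidInd L' w' := by
  unfold avoidInd
  congr 1
  exact propext h

theorem patContains_append_one_cons_cons {τ : List ℕ}
    (hM : ∀ c ∈ σ :: τ :: M, IsRGF c ∧ Connected c) (hu : ∀ x ∈ u, 1 ≤ x) :
    PatContains (u ++ [1]) (rgfConcat (σ :: τ :: M)) ↔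
      PatContains u (rgfConcat (σ :: τ :: M)) := by
  obtain ⟨⟨-, hσ, -⟩, hM⟩ := List.forall_mem_cons.1 hM
  have hτ : τ ≠ [] := (hM τ List.mem_cons_self).2.1
  exact patContains_append_one_rgfComp hu hσ (List.append_ne_nil_of_left_ne_nil hτ _)
    (isRGF_rgfConcat fun c hc => (hM c hc).1).1

theorem patContains_rgfComp_cons_of_avoids (hM : ∀ c ∈ σ :: M, IsRGF c ∧ Connected c)
    (hu : ¬ PatContains u σ) (hv : ∀ x ∈ v, 1 ≤ x) :
    PatContains (rgfComp u v) (rgfConcat (σ :: M)) ↔ PatContains v (rgfConcat (σ :: M)) := by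
  rw [patContains_rgfComp_rgfConcat hM hv]
  constructor
  · rintro ⟨L₁, L₂, hL, h₁, h₂⟩
    rcases List.cons_eq_append_iff.1 hL with ⟨rfl, rfl⟩ | ⟨L₁, rfl, rfl⟩
    · exact h₂
    · exact absurd h₁.of_rgfComp_left hu
  · exact fun h => ⟨[], σ :: M, rfl, patContains_nil u, h⟩

theorem patContains_append_one_rgfComp_cons_of_avoids (hM : ∀ c ∈ σ :: M, IsRGF c ∧ Connected c)
    (hu1 : ∀ x ∈ u, 1 ≤ x) (hu : ¬ PatContains u σ) (hσ : PatContains (u ++ [1]) σ)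
    (hv : ∀ x ∈ v, 1 ≤ x) :
    PatContains (rgfComp (u ++ [1]) v) (rgfConcat (σ :: M)) ↔ PatContains v (rgfConcat M) := by
  rw [patContains_rgfComp_rgfConcat hM hv]
  constructor
  · rintro ⟨L₁, L₂, hL, h₁, h₂⟩
    rcases List.cons_eq_append_iff.1 hL with ⟨rfl, rfl⟩ | ⟨_ | ⟨τ, L₁⟩, rfl, rfl⟩
    · exact h₂.of_rgfComp_right
    · exact h₂
    · have hL₁ := (List.forall_mem_append (l₁ := σ :: τ :: L₁)).1 hM |>.1
      rw [patContains_append_one_cons_cons hL₁ hu1] at h₁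
      exact absurd h₁.of_rgfComp_left hu
  · exact fun h => ⟨[σ], M, rfl, (rgfConcat_singleton σ).symm ▸ hσ, h⟩

theorem patContains_append_one_rgfComp_cons_of_contains
    (hM : ∀ c ∈ σ :: M, IsRGF c ∧ Connected c) (hu1 : ∀ x ∈ u, 1 ≤ x) (hu : PatContains u σ)
    (hv : ∀ x ∈ v, 1 ≤ x) :
    PatContains (rgfComp (u ++ [1]) v) (rgfConcat (σ :: M)) ↔
      PatContains (rgfComp u v) (rgfConcat (σ :: M)) := by
  simp only [patContains_rgfComp_rgfConcat hM hv]
  refine exists₂_congr fun L₁ L₂ => and_congr_right fun hL => and_congr_left' ?_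
  refine ⟨fun h => ?_, fun h => h.mono (List.sublist_append_left u _)⟩
  rcases List.cons_eq_append_iff.1 hL with ⟨rfl, rfl⟩ | ⟨_ | ⟨τ, L₁⟩, rfl, rfl⟩
  · exact patContains_nil u
  · rwa [rgfConcat_singleton]
  · have hL₁ := (List.forall_mem_append (l₁ := σ :: τ :: L₁)).1 hM |>.1
    exact (patContains_append_one_cons_cons hL₁ hu1).1 h

theorem avoidInd_append_one_rgfComp (hM : ∀ c ∈ σ :: M, IsRGF c ∧ Connected c)
    (hu1 : ∀ x ∈ u, 1 ≤ x) (hv : ∀ x ∈ v, 1 ≤ x) :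
    avoidInd (σ :: M) (rgfComp (u ++ [1]) v) = avoidInd (σ :: M) (rgfComp u v) +
      critInd σ u * (avoidInd M v - avoidInd (σ :: M) v) := by
  by_cases hu : PatContains u σ
  · rw [critInd, if_neg fun h => h.2 hu, zero_mul, add_zero]
    exact avoidInd_congr (patContains_append_one_rgfComp_cons_of_contains hM hu1 hu hv)
  rw [avoidInd_congr (patContains_rgfComp_cons_of_avoids hM hu hv)]
  by_cases hσ : PatContains (u ++ [1]) σ
  · rw [critInd, if_pos ⟨hσ, hu⟩, one_mul, add_sub_cancel]
    exact avoidInd_congr (patContains_append_one_rgfComp_cons_of_avoids hM hu1 hu hσ hv)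
  · rw [critInd, if_neg fun h => hσ h.1, zero_mul, add_zero]
    exact avoidInd_congr (patContains_rgfComp_cons_of_avoids hM hσ hv)

theorem avoidInd_cons_nil (hσ : σ ≠ []) : avoidInd (σ :: M) [] = 1 :=
  if_neg fun h => hσ <| List.length_eq_zero_iff.1 <|
    Nat.eq_zero_of_le_zero h.of_rgfComp_left.length_le

end Indicators

/-! ### Non-crossing words and binary trees -/

section NonCrossing

variable {u v w m : List ℕ}

theorem NonCrossing.of_rgfComp_left (h : NonCrossing (rgfComp u v)) : NonCrossing u :=
  fun hu => h (hu.mono (List.sublist_append_left u _))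

theorem NonCrossing.of_rgfComp_right (h : NonCrossing (rgfComp u v)) : NonCrossing v :=
  fun hv => h (((patContains_map_add _).2 hv).mono (List.sublist_append_right u _))

theorem NonCrossing.append_one (h : NonCrossing w) (hw : ∀ x ∈ w, 1 ≤ x) :
    NonCrossing (w ++ [1]) := fun hc =>
  h (PatContains.of_append_one (p := [1, 2, 1]) (x := 1) hc hw (by simp) one_lt_two)

theorem NonCrossing.rgfComp (hu : NonCrossing u) (hv : NonCrossing v) (hv1 : ∀ x ∈ v, 1 ≤ x) :
    NonCrossing (rgfComp u v) := by
  intro h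
  obtain ⟨p₁, p₂, hp, hlt, h₁, h₂⟩ := h.exists_eq_append_of_rgfComp hv1
  have trivial_cut : p₁ = [] ∨ p₂ = [] := by
    by_contra! hne
    obtain ⟨x, p₁, rfl⟩ := List.exists_cons_of_ne_nil hne.1
    simp only [List.cons_append, List.cons.injEq, List.cons_eq_append_iff,
      List.nil_eq_append_iff] at hp
    rcases hp with ⟨rfl, ⟨rfl, rfl⟩ | ⟨_, rfl, ⟨rfl, rfl⟩ | ⟨_, rfl, ⟨rfl, rfl⟩ | ⟨_, -, -, h⟩⟩⟩⟩
    · simp at hlt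
    · simp at hlt
    · simp at hlt
    · exact hne.2 h
  rcases trivial_cut with rfl | rfl
  · exact hv (hp ▸ h₂)
  · rw [List.append_nil] at hp
    exact hu (hp ▸ h₁)

theorem IsRGF.lt_of_nonCrossing (h : IsRGF (u ++ 1 :: m)) (hn : NonCrossing (u ++ 1 :: m))
    (hm : 1 ∉ m) : ∀ x ∈ u ++ [1], ∀ y ∈ m, x < y := by
  intro x hx y hy
  rw [← List.singleton_append, ← List.append_assoc] at h
  have hy1 : 1 < y := lt_of_le_of_ne (h.1 y (List.mem_append_right _ hy)) fun e => hm (e ▸ hy)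
  by_contra! hyx
  have hyu : y ∈ u := by
    simpa [hy1.ne'] using h.of_append.mem_of_le hy1.le (hyx.trans (le_nLetters hx))
  obtain ⟨z, u, rfl⟩ := List.exists_cons_of_ne_nil (List.ne_nil_of_mem hyu)
  obtain rfl : z = 1 := h.2.1 (List.cons_ne_nil z _)
  have hyu : y ∈ u := (List.mem_cons.1 hyu).resolve_left hy1.ne'
  refine hn (patContains_iff.2 ⟨fun i => if i = 1 then 1 else y, ?_, ?_⟩)
  · simp [StrictMonoOn, hy1]
  · simpa using (List.singleton_sublist.2 hyu).append ((List.singleton_sublist.2 hy).cons_cons 1)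

theorem exists_eq_append_one_append (h : 1 ∈ w) : ∃ u m, w = u ++ 1 :: m ∧ 1 ∉ m := by
  obtain ⟨m, u, hw, hm⟩ := List.eq_append_cons_of_mem (List.mem_reverse.2 h)
  exact ⟨u.reverse, m.reverse, by simpa using congrArg List.reverse hw, by simpa using hm⟩

theorem append_one_append_inj {u' m' : List ℕ} (hm : 1 ∉ m) (hm' : 1 ∉ m')
    (h : u ++ 1 :: m = u' ++ 1 :: m') : u = u' ∧ m = m' := by
  rcases List.append_eq_append_iff.1 h with ⟨_ | ⟨x, r⟩, hu, hr⟩ | ⟨_ | ⟨x, r⟩, hu, hr⟩ <;>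
    simp_all

theorem IsRGF.exists_eq_append_one_rgfComp (h : IsRGF w) (hn : NonCrossing w) (hw : w ≠ []) :
    ∃ u v, IsRGF u ∧ IsRGF v ∧ w = _root_.rgfComp (u ++ [1]) v := by
  have h1 : 1 ∈ w := h.mem_of_le le_rfl (h.1 _ (nLetters_mem hw))
  obtain ⟨u, m, rfl, hm⟩ := exists_eq_append_one_append h1
  have hlt := h.lt_of_nonCrossing hn hm
  rw [← List.singleton_append, ← List.append_assoc] at h ⊢
  obtain ⟨v, hv, huv⟩ := h.exists_eq_rgfComp hlt
  exact ⟨u, v, h.of_append.of_append, hv, huv⟩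

theorem connected_append_one (w : List ℕ) : Connected (w ++ [1]) := by
  refine ⟨by simp, ?_⟩
  rintro ⟨a, b, ha, hb, ha0, hb0, h⟩
  obtain ⟨b, y, rfl⟩ := (List.eq_nil_or_concat b).resolve_left hb0
  rw [List.concat_eq_append] at h hb
  rw [rgfComp_append, List.map_singleton] at h
  have hy : 1 = y + nLetters a := List.singleton_injective (List.append_inj_right' h rfl)
  have hy1 := hb.1 y (by simp)
  have ha1 := ha.1 _ (nLetters_mem ha0)
  omega

end NonCrossing

section Trees

open BinaryTree

/-- The non-crossing RGF of a binary tree: the node with subtrees `a` and `b` stands for `u1[v]`,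
where `u` and `v` are the words of `a` and `b`. -/
def treeRGF : BinaryTree Unit → List ℕ
  | nil => []
  | node _ a b => rgfComp (treeRGF a ++ [1]) (treeRGF b)

/-- The length of the right spine of a binary tree, which is the number of components of its
RGF. -/
def numComps : BinaryTree Unit → ℕ
  | nil => 0
  | node _ _ b => numComps b + 1

theorem isRGF_treeRGF (t : BinaryTree Unit) : IsRGF (treeRGF t) := by
  induction t with
  | nil => exact isRGF_nil
  | node _ a b iha ihb => exact iha.append_one.rgfComp ihb

theorem nonCrossing_treeRGF (t : BinaryTree Unit) : NonCrossing (treeRGF t) := by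
  induction t with
  | nil => exact fun h => absurd h.length_le (by decide)
  | node _ a b iha ihb => exact (iha.append_one (isRGF_treeRGF a).1).rgfComp ihb (isRGF_treeRGF b).1

theorem length_treeRGF (t : BinaryTree Unit) : (treeRGF t).length = t.numNodes := by
  induction t with
  | nil => rfl
  | node _ a b iha ihb =>
    simp only [treeRGF, rgfComp, List.length_append, List.length_map, List.length_singleton, iha,
      ihb, numNodes]
    omega

theorem treeRGF_injective : Function.Injective treeRGF := by
  intro t
  have one_notMem (a b : BinaryTree Unit) :
      1 ∉ (treeRGF b).map (· + nLetters (treeRGF a ++ [1])) := fun h => lt_irrefl 1 <|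
    lt_of_mem_of_mem_map_add_nLetters (isRGF_treeRGF b).1 1 (by simp) 1 h
  induction t with
  | nil =>
    rintro (_ | ⟨_, a, b⟩) h
    · rfl
    · simp [treeRGF, rgfComp] at h
  | node _ a b iha ihb =>
    rintro (_ | ⟨_, a', b'⟩) h
    · simp [treeRGF, rgfComp] at h
    simp only [treeRGF, rgfComp, List.append_assoc, List.singleton_append] at h
    obtain ⟨ha, hb⟩ := append_one_append_inj (one_notMem a b) (one_notMem a' b') h
    obtain rfl := iha ha
    obtain rfl := ihb (List.map_injective_iff.2 (add_left_injective _) hb)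
    rfl

theorem exists_treeRGF_eq {w : List ℕ} (h : IsRGF w) (hn : NonCrossing w) :
    ∃ t, treeRGF t = w := by
  induction hl : w.length using Nat.strong_induction_on generalizing w with
  | _ n ih =>
    rcases eq_or_ne w [] with rfl | hw
    · exact ⟨nil, rfl⟩
    obtain ⟨u, v, hu, hv, rfl⟩ := h.exists_eq_append_one_rgfComp hn hw
    simp only [rgfComp, List.length_append, List.length_map, List.length_singleton] at hl
    have hnu : NonCrossing u := fun hc =>
      hn.of_rgfComp_left (hc.mono (List.sublist_append_left u _))
    obtain ⟨a, rfl⟩ := ih u.length (by omega) hu hnu rfl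
    obtain ⟨b, rfl⟩ := ih v.length (by omega) hv hn.of_rgfComp_right rfl
    exact ⟨a △ b, rfl⟩

theorem Connected.exists_eq_treeRGF_append_one {c : List ℕ} (hc : Connected c) (h : IsRGF c)
    (hn : NonCrossing c) : ∃ a, c = treeRGF a ++ [1] := by
  obtain ⟨_ | ⟨_, a, b⟩, rfl⟩ := exists_treeRGF_eq h hn
  · exact absurd rfl hc.1
  refine ⟨a, ?_⟩
  by_cases hb : treeRGF b = []
  · rw [treeRGF, hb, rgfComp_nil]
  · exact absurd ⟨treeRGF a ++ [1], treeRGF b, (isRGF_treeRGF a).append_one, isRGF_treeRGF b,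
      by simp, hb, rfl⟩ hc.2

theorem exists_treeRGF_eq_rgfConcat {L : List (List ℕ)} (hL : ∀ c ∈ L, IsRGF c ∧ Connected c)
    (hn : NonCrossing (rgfConcat L)) : ∃ t, treeRGF t = rgfConcat L ∧ numComps t = L.length := by
  induction L with
  | nil => exact ⟨nil, rfl, rfl⟩
  | cons c L ih =>
    obtain ⟨⟨hc, hconn⟩, hL⟩ := List.forall_mem_cons.1 hL
    obtain ⟨b, hb, hbL⟩ := ih hL hn.of_rgfComp_right
    obtain ⟨a, rfl⟩ := hconn.exists_eq_treeRGF_append_one hc hn.of_rgfComp_left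
    exact ⟨a △ b, by rw [treeRGF, hb, rgfConcat_cons], by rw [numComps, hbL, List.length_cons]⟩

theorem hasComponents_numComps (t : BinaryTree Unit) :
    HasComponents (treeRGF t) (numComps t) := by
  induction t with
  | nil => exact ⟨[], rfl, by simp, rfl⟩
  | node _ a b _ ihb =>
    obtain ⟨L, hlen, hL, hb⟩ := ihb
    refine ⟨(treeRGF a ++ [1]) :: L, congrArg (· + 1) hlen, List.forall_mem_cons.2 ⟨?_, hL⟩, ?_⟩
    · exact ⟨(isRGF_treeRGF a).append_one, connected_append_one _⟩
    · rw [treeRGF, hb, List.foldr_cons]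

theorem hasComponents_treeRGF {t : BinaryTree Unit} {p : ℕ} :
    HasComponents (treeRGF t) p ↔ numComps t = p := by
  refine ⟨?_, fun h => h ▸ hasComponents_numComps t⟩
  rintro ⟨L, rfl, hL, (ht : treeRGF t = rgfConcat L)⟩
  obtain ⟨t', ht', hlen⟩ := exists_treeRGF_eq_rgfConcat hL (ht ▸ nonCrossing_treeRGF t)
  rwa [treeRGF_injective (ht.trans ht'.symm)]

open scoped Classical in
theorem ncCount_eq_card (n p : ℕ) (σ : List ℕ) : ncCount n p σ =
    {t ∈ treesOfNumNodesEq n | numComps t = p ∧ ¬ PatContains (treeRGF t) σ}.card := by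
  rw [ncCount, ← Finset.card_image_of_injective _ treeRGF_injective, ← Set.ncard_coe_finset]
  congr 1
  ext w
  simp only [Set.mem_ofPred_eq, Finset.coe_image, Set.mem_image, Finset.coe_filter,
    mem_treesOfNumNodesEq]
  constructor
  · rintro ⟨hw, hn, rfl, hσ, hp⟩
    obtain ⟨t, rfl⟩ := exists_treeRGF_eq hw hn
    exact ⟨t, ⟨(length_treeRGF t).symm, hasComponents_treeRGF.1 hp, hσ⟩, rfl⟩
  · rintro ⟨t, ⟨rfl, hp, hσ⟩, rfl⟩
    exact ⟨isRGF_treeRGF t, nonCrossing_treeRGF t, length_treeRGF t, hσ,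
      hasComponents_treeRGF.2 hp⟩

theorem numComps_le_numNodes (t : BinaryTree Unit) : numComps t ≤ t.numNodes := by
  induction t with
  | nil => exact le_rfl
  | node _ a b _ ihb => exact Nat.succ_le_succ (ihb.trans (Nat.le_add_left _ _))

end Trees

/-! ### Grafting -/

section Grafting

open BinaryTree

/-- The tree obtained from `a` by putting `b` at the end of its right spine; on words, it is the
composition `(u, v) ↦ u[v]`. -/
def graft : BinaryTree Unit → BinaryTree Unit → BinaryTree Unit
  | nil, b => b
  | node _ x y, b => x △ graft y b

theorem treeRGF_graft (a b : BinaryTree Unit) :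
    treeRGF (graft a b) = rgfComp (treeRGF a) (treeRGF b) := by
  induction a with
  | nil => exact (nil_rgfComp _).symm
  | node _ x y _ ih => rw [graft, treeRGF, ih, treeRGF, rgfComp_assoc]

theorem numNodes_graft (a b : BinaryTree Unit) :
    (graft a b).numNodes = a.numNodes + b.numNodes := by
  induction a with
  | nil => simp [graft]
  | node _ x y _ ih =>
    rw [graft, numNodes, ih, numNodes]
    omega

theorem numComps_graft (a b : BinaryTree Unit) :
    numComps (graft a b) = numComps a + numComps b := by
  induction a with
  | nil => simp [graft, numComps]
  | node _ x y _ ih =>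
    rw [graft, numComps, ih, numComps]
    omega

theorem graft_inj {a b a' b' : BinaryTree Unit} (hb : numComps b = numComps b')
    (h : graft a b = graft a' b') : a = a' ∧ b = b' := by
  have hcomps := congrArg numComps h
  rw [numComps_graft, numComps_graft, hb, Nat.add_right_cancel_iff] at hcomps
  induction a generalizing a' with
  | nil =>
    cases a' with
    | nil => exact ⟨rfl, h⟩
    | node _ x' y' => simp [numComps] at hcomps
  | node _ x y _ ih =>
    cases a' with
    | nil => simp [numComps] at hcomps
    | node _ x' y' =>
      injection h with _ hx hy
      obtain ⟨rfl, rfl⟩ := ih hy (Nat.succ_injective hcomps)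
      exact ⟨by rw [hx], rfl⟩

theorem exists_graft_eq {t : BinaryTree Unit} {p : ℕ} (h : p ≤ numComps t) :
    ∃ a b, graft a b = t ∧ numComps b = p := by
  induction t with
  | nil => exact ⟨nil, nil, rfl, (Nat.eq_zero_of_le_zero h).symm⟩
  | node _ x y _ ih =>
    rcases Nat.le_or_eq_of_le_succ h with h | rfl
    · obtain ⟨a, b, rfl, hb⟩ := ih h
      exact ⟨x △ a, b, rfl, hb⟩
    · exact ⟨nil, x △ y, rfl, rfl⟩

theorem sum_treesOfNumNodesEq_succ {M : Type*} [AddCommMonoid M] (n p : ℕ)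
    (g : BinaryTree Unit → M) :
    ∑ t ∈ treesOfNumNodesEq (n + 1) with numComps t = p + 1, g t =
      ∑ ij ∈ Finset.HasAntidiagonal.antidiagonal n, ∑ a ∈ treesOfNumNodesEq ij.1,
        ∑ b ∈ treesOfNumNodesEq ij.2 with numComps b = p, g (a △ b) := by
  rw [Finset.sum_filter, treesOfNumNodesEq_succ, Finset.sum_biUnion]
  · refine Finset.sum_congr rfl fun ij _ => ?_
    rw [Finset.sum_map, Finset.sum_product]
    refine Finset.sum_congr rfl fun a _ => ?_
    rw [Finset.sum_filter]
    exact Finset.sum_congr rfl fun b _ => if_congr Nat.succ_inj rfl rfl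
  · simp_rw [Set.PairwiseDisjoint, Set.Pairwise, Finset.disjoint_left]
    aesop

theorem sum_graft {M : Type*} [AddCommMonoid M] (n p : ℕ) (g : BinaryTree Unit → M) :
    ∑ ij ∈ Finset.HasAntidiagonal.antidiagonal n, ∑ a ∈ treesOfNumNodesEq ij.1,
        ∑ b ∈ treesOfNumNodesEq ij.2 with numComps b = p, g (graft a b) =
      ∑ t ∈ treesOfNumNodesEq n with p ≤ numComps t, g t := by
  refine (sum_treesOfNumNodesEq_succ n p fun t => g (graft t.left t.right)).symm.trans ?_
  refine Finset.sum_nbij (fun t => graft t.left t.right) ?_ ?_ ?_ fun _ _ => rfl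
  · rintro (_ | ⟨_, a, b⟩) ht
    · simp [numComps] at ht
    · simp only [Finset.mem_filter, mem_treesOfNumNodesEq, numNodes, numComps, left, right,
        numNodes_graft, numComps_graft] at ht ⊢
      omega
  · rintro (_ | ⟨_, a, b⟩) ht (_ | ⟨_, a', b'⟩) ht' h
    · rfl
    · simp [numComps] at ht
    · simp [numComps] at ht'
    · have hb := (Finset.mem_filter.1 ht).2.trans (Finset.mem_filter.1 ht').2.symm
      obtain ⟨rfl, rfl⟩ := graft_inj (Nat.succ_injective hb) h
      rfl
  · intro t ht
    rw [Finset.mem_coe, Finset.mem_filter, mem_treesOfNumNodesEq] at ht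
    obtain ⟨a, b, rfl, hb⟩ := exists_graft_eq ht.2
    rw [numNodes_graft] at ht
    refine ⟨a △ b, ?_, rfl⟩
    simp [numComps, hb, numNodes, ht.1]

end Grafting

/-! ### Commuting transfer recurrences -/

section Transfer

open PowerSeries

variable {R : Type*} [CommRing R] {a b : R⟦X⟧} {U G G' : ℕ → R⟦X⟧}

/-- The operator of the homogeneous linear recurrence
`U (p + 1) - U (p + 2) = X * (U p - b * (U p - U (p + 1)))` on sequences of power series: its
kernel consists of the solutions. -/
noncomputable def transferOp (b : R⟦X⟧) (U : ℕ → R⟦X⟧) (p : ℕ) : R⟦X⟧ :=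
  U (p + 1) - U (p + 2) - X * (U p - b * (U p - U (p + 1)))

/-- `Transfers b G U` says that `U` is the solution of the recurrence of `transferOp b` with
source term built from the differences of `G`, under the boundary conditions satisfied by the
generating functions of words with at least `p` components. Passing from the pattern
`σ₂[σ₃]⋯[σ_k]` to `σ₁[σ₂]⋯[σ_k]` is such a transfer, with a multiplier depending only on `σ₁`. -/
structure Transfers (b : R⟦X⟧) (G U : ℕ → R⟦X⟧) : Prop where
  X_pow_dvd : ∀ p, X ^ p ∣ U p
  zero_sub_one : U 0 - U 1 = 1
  transferOp_eq : ∀ p, transferOp b U p = X * (b * (G p - G (p + 1)))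

theorem transferOp_comm (a b : R⟦X⟧) (U : ℕ → R⟦X⟧) :
    transferOp a (transferOp b U) = transferOp b (transferOp a U) := by
  ext1 p
  simp only [transferOp]
  ring

theorem transferOp_sub (b : R⟦X⟧) (U V : ℕ → R⟦X⟧) :
    transferOp b (U - V) = transferOp b U - transferOp b V := by
  ext1 p
  simp only [transferOp, Pi.sub_apply]
  ring

theorem eq_zero_of_forall_X_pow_dvd {φ : R⟦X⟧} (h : ∀ n, X ^ n ∣ φ) : φ = 0 :=
  ext fun n => X_pow_dvd_iff.1 (h (n + 1)) n n.lt_succ_self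

theorem X_pow_succ_dvd_of_transferOp_eq_zero (hU : ∀ p, X ^ p ∣ U p) (h : transferOp b U = 0)
    {n : ℕ} (hn : ∀ p, X ^ n ∣ U p) (p : ℕ) : X ^ (n + 1) ∣ U (p + 1) := by
  have consecutive (p : ℕ) : X ^ (n + 1) ∣ U (p + 1) - U (p + 2) := by
    rw [sub_eq_zero.1 (congrFun h p), pow_succ']
    exact mul_dvd_mul_left X ((hn p).sub (((hn p).sub (hn (p + 1))).mul_left b))
  have telescoped (k : ℕ) : X ^ (n + 1) ∣ U (p + 1) - U (p + k + 1) := by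
    induction k with
    | zero => simp
    | succ k ih =>
      have hadd := ih.add (consecutive (p + k))
      rwa [sub_add_sub_cancel] at hadd
  exact (dvd_sub_left ((pow_dvd_pow X (by omega)).trans (hU (p + n + 1)))).1 (telescoped n)

theorem eq_zero_of_transferOp_eq_zero (hU : ∀ p, X ^ p ∣ U p) (h01 : U 1 ∣ U 0)
    (h : transferOp b U = 0) : U = 0 := by
  have dvd (n : ℕ) : ∀ p, X ^ n ∣ U p := by
    induction n with
    | zero => simp
    | succ n ih =>
      have pos := X_pow_succ_dvd_of_transferOp_eq_zero hU h ih
      rintro (_ | p)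
      · exact (pos 0).trans h01
      · exact pos p
  exact funext fun p => eq_zero_of_forall_X_pow_dvd fun n => dvd n p

theorem Transfers.sub_zero_eq_sub_one {a : R⟦X⟧} {U' : ℕ → R⟦X⟧} (h : Transfers b G U)
    (h' : Transfers a G' U') : (U - U') 0 = (U - U') 1 :=
  sub_eq_sub_iff_sub_eq_sub.1 (h.zero_sub_one.trans h'.zero_sub_one.symm)

theorem Transfers.unique {U' : ℕ → R⟦X⟧} (h : Transfers b G U) (h' : Transfers b G U') :
    U = U' := by
  refine sub_eq_zero.1 (eq_zero_of_transferOp_eq_zero (b := b) (fun p => ?_) ?_ ?_)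
  · exact (h.X_pow_dvd p).sub (h'.X_pow_dvd p)
  · exact (sub_zero_eq_sub_one h h').symm.dvd
  · rw [transferOp_sub, sub_eq_zero]
    exact funext fun p => (h.transferOp_eq p).trans (h'.transferOp_eq p).symm

theorem Transfers.transferOp_transferOp {E D : ℕ → R⟦X⟧} (hE : Transfers b G E)
    (hD : Transfers a E D) (p : ℕ) : transferOp b (transferOp a D) p =
      X * (a * (X * (b * (G p - 2 * G (p + 1) + G (p + 2))))) := by
  rw [funext hD.transferOp_eq]
  have h₀ := hE.transferOp_eq p
  have h₁ := hE.transferOp_eq (p + 1)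
  simp only [transferOp] at h₀ h₁ ⊢
  linear_combination X * a * (h₀ - h₁)

/-- Up to the boundary conditions, `D` solves a recurrence of order two whose operator and source
are symmetric in `a` and `b`, as the two operators commute. -/
theorem Transfers.comm {E D E' D' : ℕ → R⟦X⟧} (hE : Transfers b G E) (hD : Transfers a E D)
    (hE' : Transfers a G E') (hD' : Transfers b E' D') : D = D' := by
  have hZ (p : ℕ) : X ^ p ∣ (D - D') p := (hD.X_pow_dvd p).sub (hD'.X_pow_dvd p)
  have hZ01 : (D - D') 0 = (D - D') 1 := hD.sub_zero_eq_sub_one hD'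
  have hV (p : ℕ) : X ^ p ∣ transferOp a (D - D') p := by
    have mono {i : ℕ} (hi : p ≤ i) : X ^ p ∣ (D - D') i := (pow_dvd_pow X hi).trans (hZ i)
    refine ((mono (by omega)).sub (mono (by omega))).sub (.mul_left ?_ X)
    exact (hZ p).sub (((hZ p).sub (mono (by omega))).mul_left a)
  have hV0 : transferOp a (D - D') 0 = 0 := by
    have hD0 := hD.transferOp_eq 0
    have hD0' := hD'.transferOp_eq 0
    simp only [transferOp, zero_add, hE.zero_sub_one, hE'.zero_sub_one, Pi.sub_apply] at hD0 hD0' ⊢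
    linear_combination hD0 - hD0' - X * (a - b) * hD'.zero_sub_one
  have hbV : transferOp b (transferOp a (D - D')) = 0 := by
    rw [transferOp_sub, transferOp_sub, sub_eq_zero, transferOp_comm b a D']
    ext1 p
    rw [hE.transferOp_transferOp hD, hE'.transferOp_transferOp hD']
    ring
  have hV_zero : transferOp a (D - D') = 0 :=
    eq_zero_of_transferOp_eq_zero hV (hV0 ▸ dvd_zero _) hbV
  exact sub_eq_zero.1 (eq_zero_of_transferOp_eq_zero hZ hZ01.symm.dvd hV_zero)

end Transfer

/-! ### Generating functions of non-crossing words -/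

section GeneratingFunctions

open BinaryTree PowerSeries

variable {σ : List ℕ} {L M : List (List ℕ)}

/-- The generating function, by length, of the non-crossing RGFs with at least `p` components that
avoid `σ₁[σ₂]⋯[σ_k]`, where `L` is the list of factors. -/
noncomputable def avoidGF (L : List (List ℕ)) (p : ℕ) : ℤ⟦X⟧ :=
  mk fun n => ∑ t ∈ treesOfNumNodesEq n with p ≤ numComps t, avoidInd L (treeRGF t)

/-- The generating function, by length, of the non-crossing RGFs `u` that avoid `σ` and for which
`u` followed by `1` contains `σ`. -/
noncomputable def critGF (σ : List ℕ) : ℤ⟦X⟧ :=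
  mk fun n => ∑ t ∈ treesOfNumNodesEq n, critInd σ (treeRGF t)

theorem coeff_avoidGF_sub_succ (L : List (List ℕ)) (n p : ℕ) :
    coeff n (avoidGF L p - avoidGF L (p + 1)) =
      ∑ t ∈ treesOfNumNodesEq n with numComps t = p, avoidInd L (treeRGF t) := by
  simp only [avoidGF, map_sub, coeff_mk, Finset.sum_filter, ← Finset.sum_sub_distrib]
  refine Finset.sum_congr rfl fun t _ => ?_
  split_ifs <;> grind

theorem natCast_ncCount_rgfConcat (L : List (List ℕ)) (n p : ℕ) :
    (ncCount n p (rgfConcat L) : ℤ) = coeff n (avoidGF L p - avoidGF L (p + 1)) := by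
  classical
  rw [ncCount_eq_card, coeff_avoidGF_sub_succ, ← Finset.filter_filter, Finset.card_filter,
    Nat.cast_sum]
  exact Finset.sum_congr rfl fun t _ => by simp [avoidInd]

theorem X_pow_dvd_avoidGF (L : List (List ℕ)) (p : ℕ) : X ^ p ∣ avoidGF L p := by
  refine X_pow_dvd_iff.2 fun n hn => ?_
  rw [avoidGF, coeff_mk, Finset.filter_eq_empty_iff.2, Finset.sum_empty]
  intro t ht hp
  exact hn.not_ge (mem_treesOfNumNodesEq.1 ht ▸ hp.trans (numComps_le_numNodes t))

theorem avoidGF_zero_sub_one (hσ : σ ≠ []) : avoidGF (σ :: M) 0 - avoidGF (σ :: M) 1 = 1 := by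
  ext n
  rw [coeff_avoidGF_sub_succ, coeff_one, Finset.sum_filter]
  cases n with
  | zero => simp [numComps, treeRGF, avoidInd_cons_nil hσ]
  | succ n =>
    rw [if_neg n.succ_ne_zero]
    refine Finset.sum_eq_zero fun t ht => if_neg ?_
    rcases t with _ | ⟨_, a, b⟩
    · simp at ht
    · exact (numComps b).succ_ne_zero

theorem coeff_succ_avoidGF_sub (hM : ∀ c ∈ σ :: M, IsRGF c ∧ Connected c) (n p : ℕ) :
    coeff (n + 1) (avoidGF (σ :: M) (p + 1) - avoidGF (σ :: M) (p + 2)) =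
      coeff n (avoidGF (σ :: M) p + critGF σ * ((avoidGF M p - avoidGF M (p + 1)) -
        (avoidGF (σ :: M) p - avoidGF (σ :: M) (p + 1)))) := by
  have deletion (a b : BinaryTree Unit) : avoidInd (σ :: M) (treeRGF (a △ b)) =
      avoidInd (σ :: M) (treeRGF (graft a b)) + critInd σ (treeRGF a) *
        (avoidInd M (treeRGF b) - avoidInd (σ :: M) (treeRGF b)) := by
    rw [treeRGF_graft]
    exact avoidInd_append_one_rgfComp hM (isRGF_treeRGF a).1 (isRGF_treeRGF b).1
  rw [coeff_avoidGF_sub_succ, sum_treesOfNumNodesEq_succ, map_add, coeff_mul]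
  simp only [deletion, Finset.sum_add_distrib]
  congr 1
  · rw [avoidGF, coeff_mk, sum_graft n p fun t => avoidInd (σ :: M) (treeRGF t)]
  · refine Finset.sum_congr rfl fun ij _ => ?_
    rw [map_sub, coeff_avoidGF_sub_succ, coeff_avoidGF_sub_succ, critGF, coeff_mk,
      ← Finset.sum_sub_distrib, Finset.sum_mul_sum]

theorem transfers_avoidGF (hM : ∀ c ∈ σ :: M, IsRGF c ∧ Connected c) :
    Transfers (critGF σ) (avoidGF M) (avoidGF (σ :: M)) where
  X_pow_dvd := X_pow_dvd_avoidGF _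
  zero_sub_one := avoidGF_zero_sub_one (hM σ List.mem_cons_self).2.1
  transferOp_eq p := by
    have recurrence : avoidGF (σ :: M) (p + 1) - avoidGF (σ :: M) (p + 2) =
        X * (avoidGF (σ :: M) p + critGF σ * ((avoidGF M p - avoidGF M (p + 1)) -
          (avoidGF (σ :: M) p - avoidGF (σ :: M) (p + 1)))) := by
      ext (_ | n)
      · rw [coeff_zero_X_mul, coeff_avoidGF_sub_succ]
        simp [Finset.sum_filter, numComps]
      · rw [coeff_succ_X_mul, coeff_succ_avoidGF_sub hM]
    rw [transferOp, recurrence]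
    ring

theorem avoidGF_eq_of_perm (h : L.Perm M) (hL : ∀ c ∈ L, IsRGF c ∧ Connected c) :
    avoidGF L = avoidGF M := by
  induction h with
  | nil => rfl
  | cons σ h ih =>
    have hM := fun c hc => hL c ((h.cons σ).mem_iff.2 hc)
    have transfers := transfers_avoidGF hL
    rw [ih fun c hc => hL c (List.mem_cons_of_mem σ hc)] at transfers
    exact transfers.unique (transfers_avoidGF hM)
  | swap τ σ K =>
    have hL' := fun c hc => hL c ((List.Perm.swap τ σ K).mem_iff.2 hc)
    have hσ := transfers_avoidGF (List.forall_mem_cons.1 hL').2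
    have hτ := transfers_avoidGF (List.forall_mem_cons.1 hL).2
    exact hτ.comm (transfers_avoidGF hL) hσ (transfers_avoidGF hL')
  | trans h _ ih ih' => exact (ih hL).trans (ih' fun c hc => hL c (h.mem_iff.2 hc))

end GeneratingFunctions

/-! ### Permuting the factors -/

theorem ccEquiv_rgfConcat_of_perm_of_connected {L M : List (List ℕ)} (h : L.Perm M)
    (hL : ∀ c ∈ L, IsRGF c ∧ Connected c) : ccEquiv (rgfConcat L) (rgfConcat M) := by
  intro n p
  rw [← Nat.cast_inj (R := ℤ), natCast_ncCount_rgfConcat, natCast_ncCount_rgfConcat,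
    avoidGF_eq_of_perm h hL]

theorem stmt8_general {L M : List (List ℕ)} (h : L.Perm M) (hL : ∀ c ∈ L, IsRGF c) :
    ccEquiv (L.foldr rgfComp []) (M.foldr rgfComp []) := by
  have components : ∀ c, ∃ K : List (List ℕ), IsRGF c →
      (∀ d ∈ K, IsRGF d ∧ Connected d) ∧ rgfConcat K = c := fun c => by
    by_cases hc : IsRGF c
    · exact (exists_rgfConcat_eq hc).imp fun _ hK _ => hK
    · exact ⟨[], fun h => absurd h hc⟩
  choose f hf using components
  have concat_components {K : List (List ℕ)} (hK : ∀ c ∈ K, IsRGF c) :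
      rgfConcat (K.flatMap f) = K.foldr rgfComp [] := by
    rw [rgfConcat_flatMap, List.map_congr_left fun c hc => (hf c (hK c hc)).2, List.map_id']
    rfl
  rw [← concat_components hL, ← concat_components fun c hc => hL c (h.mem_iff.2 hc)]
  refine ccEquiv_rgfConcat_of_perm_of_connected (h.flatMap_right f) fun d hd => ?_
  obtain ⟨c, hc, hd⟩ := List.mem_flatMap.1 hd
  exact (hf c (hL c hc)).1 d hd

/-- Theorem 3.4: permuting the factors of `σ₁[σ₂]⋯[σ_k]` yields a cc-equivalent
pattern. -/
theorem stmt8 (k : ℕ) (σ : Fin k → List ℕ)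
    (h : ∀ i, IsRGF (σ i) ∧ NonCrossing (σ i)) (p : Equiv.Perm (Fin k)) :
    ccEquiv ((List.ofFn σ).foldr rgfComp [])
      ((List.ofFn (fun i => σ (p i))).foldr rgfComp []) :=
  stmt8_general (Equiv.Perm.ofFn_comp_perm p σ).symm (List.forall_mem_ofFn_iff.2 fun i => (h i).1)
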